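/- arXiv:2303.11369 — 3 statements merged into one kernel-verified Lean document; each statement's English description precedes it below -/
import Mathlib

section
/- Let (Ω, F, P) be a probability space, G ⊆ F a sub-σ-algebra, E a nonempty finite type, and X, Y : Ω → E random variables that are conditionally i.i.d. given G. If Z : Ω → E is G-measurable, then P(X ≠ Y) ≤ 2·P(Z ≠ Y). -/
open MeasureTheory

/-- `P(X = x | G)`: the conditional expectation, given `G`, of the indicator of `{X = x}`. -/
noncomputable def condProbEq {Ω E : Type*} {m0 : MeasurableSpace Ω}
    (G : MeasurableSpace Ω) (μ : Measure[m0] Ω) (X : Ω → E) (x : E) : Ω → ℝ :=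
  μ[Set.indicator {ω | X ω = x} (fun _ => (1 : ℝ)) | G]

/-- `X` and `Y` are conditionally i.i.d. given the sub-σ-algebra `G`. -/
def CondIID {Ω E : Type*} {m0 : MeasurableSpace Ω}
    (G : MeasurableSpace Ω) (μ : Measure[m0] Ω) (X Y : Ω → E) : Prop :=
  (∀ x y : E,
    μ[Set.indicator {ω | X ω = x ∧ Y ω = y} (fun _ => (1 : ℝ)) | G]
      =ᵐ[μ] fun ω => condProbEq G μ X x ω * condProbEq G μ Y y ω) ∧
  (∀ x : E, condProbEq G μ X x =ᵐ[μ] condProbEq G μ Y x)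

section

open ProbabilityTheory

theorem setIntegral_condExp_indicator_one {Ω : Type*} {m m0 : MeasurableSpace Ω} {μ : Measure[m0] Ω}
    {s t : Set Ω} (hm : m ≤ m0) [SigmaFinite (μ.trim hm)] (hs : MeasurableSet[m] s)
    (ht : NullMeasurableSet t μ) (hμt : μ t ≠ ⊤) :
    ∫ ω in s, (μ⟦t | m⟧) ω ∂μ = μ.real (t ∩ s) := by
  have hint : Integrable (t.indicator fun _ => (1 : ℝ)) μ :=
    (integrableOn_const hμt).integrable_indicator₀ ht
  have ht' : NullMeasurableSet t (μ.restrict s) := ht.mono Measure.restrict_le_self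
  rw [setIntegral_condExp hm hint hs, integral_indicator₀ ht', setIntegral_const, smul_eq_mul,
    mul_one, measureReal_restrict_apply₀ ht']

theorem measure_inter_eq_of_condExp_indicator_ae_eq {Ω : Type*} {m m0 : MeasurableSpace Ω}
    {μ : Measure[m0] Ω} [IsFiniteMeasure μ] {s t u : Set Ω} (hm : m ≤ m0)
    (hs : MeasurableSet[m] s) (ht : NullMeasurableSet t μ) (hu : NullMeasurableSet u μ)
    (htu : μ⟦t | m⟧ =ᵐ[μ] μ⟦u | m⟧) :
    μ (t ∩ s) = μ (u ∩ s) := by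
  rw [← measureReal_eq_measureReal_iff,
    ← setIntegral_condExp_indicator_one hm hs ht (measure_ne_top μ t),
    ← setIntegral_condExp_indicator_one hm hs hu (measure_ne_top μ u)]
  exact integral_congr_ae (ae_restrict_of_ae htu)

theorem identDistrib_prodMk_of_condProbEq_ae_eq {Ω E F : Type*} {G m0 : MeasurableSpace Ω}
    {μ : Measure[m0] Ω} [IsFiniteMeasure μ]
    [Countable E] [MeasurableSpace E] [MeasurableSingletonClass E]
    [Countable F] [MeasurableSpace F] [MeasurableSingletonClass F]
    (hG : G ≤ m0) {X Y : Ω → E} {Z : Ω → F}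
    (hX : AEMeasurable X μ) (hY : AEMeasurable Y μ) (hZ : Measurable[G] Z)
    (hXY : ∀ x, condProbEq G μ X x =ᵐ[μ] condProbEq G μ Y x) :
    IdentDistrib (fun ω => (X ω, Z ω)) (fun ω => (Y ω, Z ω)) μ μ := by
  have hZ' : AEMeasurable Z μ := (hZ.mono hG le_rfl).aemeasurable
  refine ⟨hX.prodMk hZ', hY.prodMk hZ', Measure.ext_of_singleton fun ⟨x, z⟩ => ?_⟩
  have hfiber : μ (X ⁻¹' {x} ∩ Z ⁻¹' {z}) = μ (Y ⁻¹' {x} ∩ Z ⁻¹' {z}) :=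
    measure_inter_eq_of_condExp_indicator_ae_eq hG (hZ (measurableSet_singleton z))
      (hX.nullMeasurable (measurableSet_singleton x))
      (hY.nullMeasurable (measurableSet_singleton x)) (hXY x)
  rwa [Measure.map_apply_of_aemeasurable (hX.prodMk hZ') (measurableSet_singleton _),
    Measure.map_apply_of_aemeasurable (hY.prodMk hZ') (measurableSet_singleton _),
    ← Set.singleton_prod_singleton, Set.mk_preimage_prod, Set.mk_preimage_prod]

theorem measure_ne_le_add_measure_ne {Ω E : Type*} [MeasurableSpace Ω] (μ : Measure Ω)
    (X Y Z : Ω → E) :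
    μ {ω | X ω ≠ Y ω} ≤ μ {ω | X ω ≠ Z ω} + μ {ω | Z ω ≠ Y ω} :=
  (measure_mono fun ω hXY => (hXY.ne_or_ne (Z ω)).imp_right Ne.symm).trans (measure_union_le _ _)

theorem prob_ne_le_two_mul_prob_ne_general {Ω E : Type*} {G m0 : MeasurableSpace Ω}
    (μ : Measure[m0] Ω) [IsFiniteMeasure μ]
    [Countable E] [MeasurableSpace E] [MeasurableSingletonClass E]
    (hG : G ≤ m0) {X Y Z : Ω → E}
    (hX : AEMeasurable X μ) (hY : AEMeasurable Y μ) (hZ : Measurable[G] Z)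
    (hXY : ∀ x, condProbEq G μ X x =ᵐ[μ] condProbEq G μ Y x) :
    μ {ω | X ω ≠ Y ω} ≤ 2 * μ {ω | Z ω ≠ Y ω} := by
  have hXZ : μ {ω | X ω ≠ Z ω} = μ {ω | Y ω ≠ Z ω} :=
    (identDistrib_prodMk_of_condProbEq_ae_eq hG hX hY hZ hXY).measure_mem_eq
      (s := {p | p.1 ≠ p.2}) .of_discrete
  calc μ {ω | X ω ≠ Y ω}
      ≤ μ {ω | X ω ≠ Z ω} + μ {ω | Z ω ≠ Y ω} := measure_ne_le_add_measure_ne μ X Y Z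
    _ = 2 * μ {ω | Z ω ≠ Y ω} := by simp only [hXZ, ne_comm, two_mul]

end

/-- If `X, Y` are conditionally i.i.d. given `G` and `Z` is `G`-measurable, then
`P(X ≠ Y) ≤ 2 P(Z ≠ Y)`. -/
theorem prob_ne_le_two_mul_prob_ne
    {Ω E : Type*} [mΩ : MeasurableSpace Ω] (μ : Measure[mΩ] Ω) [IsProbabilityMeasure μ]
    [Fintype E] [Nonempty E] [MeasurableSpace E] [MeasurableSingletonClass E]
    (G : MeasurableSpace Ω) (hG : G ≤ mΩ)
    (X Y Z : Ω → E) (hX : Measurable[mΩ] X) (hY : Measurable[mΩ] Y)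
    (hXY : CondIID G μ X Y)
    (hZ : Measurable[G] Z) :
    μ {ω | X ω ≠ Y ω} ≤ 2 * μ {ω | Z ω ≠ Y ω} :=
  prob_ne_le_two_mul_prob_ne_general μ hG hX.aemeasurable hY.aemeasurable hZ hXY.2
end

section
/- Let (Ω, F, P) be a probability space, G ⊆ H ⊆ F two nested sub-σ-algebras, E a nonempty finite type, and X : Ω → E a random variable. Suppose Y_G : Ω → E is such that X and Y_G are conditionally i.i.d. given G, and Y_H : Ω → E is such that X and Y_H are conditionally i.i.d. given H. Then P(Y_H ≠ X) ≤ P(Y_G ≠ X). -/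
open MeasureTheory

/-
`P(Y = X) = ∑ₓ P(X = x, Y = x) = ∑ₓ ‖P(X = x | G)‖₂²` when `X` and `Y` are conditionally i.i.d.
given `G`. By the tower property `P(X = x | G)` is the conditional expectation of `P(X = x | H)`,
and conditional expectation is a contraction of `L²`, so the probability of agreement grows with
the σ-algebra.
-/

section

variable {Ω E : Type*} {G H mΩ : MeasurableSpace Ω} {μ : Measure Ω}

lemma eLpNorm_one_condExp_of_nonneg (hG : G ≤ mΩ) [SigmaFinite (μ.trim hG)] {f : Ω → ℝ}
    (hf : Integrable f μ) (hf_nonneg : 0 ≤ᵐ[μ] f) :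
    eLpNorm (μ[f | G]) 1 μ = eLpNorm f 1 μ := by
  have eLpNorm_eq {g : Ω → ℝ} (hg : Integrable g μ) (hg_nonneg : 0 ≤ᵐ[μ] g) :
      eLpNorm g 1 μ = ENNReal.ofReal (∫ ω, g ω ∂μ) := by
    rw [eLpNorm_one_eq_lintegral_enorm, lintegral_enorm_of_ae_nonneg hg_nonneg,
      ofReal_integral_eq_lintegral_ofReal hg hg_nonneg]
  rw [eLpNorm_eq integrable_condExp (condExp_nonneg hf_nonneg), integral_condExp hG,
    eLpNorm_eq hf hf_nonneg]

lemma eLpNorm_one_condExp_indicator_one (hG : G ≤ mΩ) [SigmaFinite (μ.trim hG)] {s : Set Ω}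
    (hs : MeasurableSet s) (hμs : μ s ≠ ⊤) :
    eLpNorm (μ[s.indicator (fun _ => (1 : ℝ)) | G]) 1 μ = μ s := by
  rw [eLpNorm_one_condExp_of_nonneg hG
    ((integrable_indicator_iff hs).2 (integrableOn_const hμs))
    (.of_forall (Set.indicator_nonneg fun _ _ => zero_le_one)),
    eLpNorm_indicator_const hs one_ne_zero ENNReal.one_ne_top]
  simp

lemma eLpNorm_condProbEq_mono (hGH : G ≤ H) (hH : H ≤ mΩ) [SigmaFinite (μ.trim hH)]
    (X : Ω → E) (x : E) {p : ENNReal} (hp : 1 ≤ p) :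
    eLpNorm (condProbEq G μ X x) p μ ≤ eLpNorm (condProbEq H μ X x) p μ :=
  calc
    eLpNorm (condProbEq G μ X x) p μ = eLpNorm (μ[condProbEq H μ X x | G]) p μ :=
      eLpNorm_congr_ae (condExp_condExp_of_le hGH hH).symm
    _ ≤ eLpNorm (condProbEq H μ X x) p μ := eLpNorm_condExp_le_eLpNorm _ hp

lemma measure_setOf_eq_eq_tsum [Countable E] [MeasurableSpace E] [MeasurableSingletonClass E]
    {X Y : Ω → E} (hX : Measurable X) (hY : Measurable Y) :
    μ {ω | Y ω = X ω} = ∑' x, μ {ω | X ω = x ∧ Y ω = x} := by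
  have h_union : {ω | Y ω = X ω} = ⋃ x, {ω | X ω = x ∧ Y ω = x} := by
    ext ω
    simp
  have h_disjoint : Pairwise (Function.onFun Disjoint fun x => {ω | X ω = x ∧ Y ω = x}) :=
    fun x y hxy => Set.disjoint_left.2 fun ω hx hy => hxy (hx.1.symm.trans hy.1)
  rw [h_union, measure_iUnion h_disjoint fun x =>
    (hX (measurableSet_singleton x)).inter (hY (measurableSet_singleton x))]

namespace CondIID

variable {X Y : Ω → E}

lemma condExp_indicator_eq_sq (h : CondIID G μ X Y) (x : E) :
    μ[Set.indicator {ω | X ω = x ∧ Y ω = x} (fun _ => (1 : ℝ)) | G]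
      =ᵐ[μ] fun ω => condProbEq G μ X x ω ^ 2 := by
  filter_upwards [h.1 x x, h.2 x] with ω h_indep h_ident
  rw [h_indep, ← h_ident, sq]

variable [IsFiniteMeasure μ] [MeasurableSpace E] [MeasurableSingletonClass E]

lemma measure_setOf_eq_and_eq (h : CondIID G μ X Y) (hG : G ≤ mΩ) (hX : Measurable X)
    (hY : Measurable Y) (x : E) :
    μ {ω | X ω = x ∧ Y ω = x} = eLpNorm (condProbEq G μ X x) 2 μ ^ 2 := by
  have h_meas : MeasurableSet {ω | X ω = x ∧ Y ω = x} :=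
    (hX (measurableSet_singleton x)).inter (hY (measurableSet_singleton x))
  calc
    μ {ω | X ω = x ∧ Y ω = x}
      = eLpNorm (fun ω => condProbEq G μ X x ω ^ 2) 1 μ := by
        rw [← eLpNorm_one_condExp_indicator_one hG h_meas (measure_ne_top μ _),
          eLpNorm_congr_ae (h.condExp_indicator_eq_sq x)]
    _ = eLpNorm (condProbEq G μ X x) 2 μ ^ 2 := by
        simpa using eLpNorm_norm_rpow (p := 1) (μ := μ) (condProbEq G μ X x) zero_lt_two

lemma measure_setOf_eq_eq_tsum_eLpNorm_sq [Countable E] (h : CondIID G μ X Y) (hG : G ≤ mΩ)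
    (hX : Measurable X) (hY : Measurable Y) :
    μ {ω | Y ω = X ω} = ∑' x, eLpNorm (condProbEq G μ X x) 2 μ ^ 2 := by
  rw [measure_setOf_eq_eq_tsum hX hY]
  exact tsum_congr (h.measure_setOf_eq_and_eq hG hX hY)

end CondIID

theorem prob_sample_ne_antitone_general [IsFiniteMeasure μ] [Countable E] [MeasurableSpace E]
    [MeasurableSingletonClass E] (hGH : G ≤ H) (hH : H ≤ mΩ) {X YG YH : Ω → E}
    (hX : Measurable X) (hYG : Measurable YG) (hYH : Measurable YH)
    (hG_iid : CondIID G μ X YG) (hH_iid : CondIID H μ X YH) :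
    μ {ω | YH ω ≠ X ω} ≤ μ {ω | YG ω ≠ X ω} := by
  have h_agree : μ {ω | YG ω = X ω} ≤ μ {ω | YH ω = X ω} := by
    rw [hG_iid.measure_setOf_eq_eq_tsum_eLpNorm_sq (hGH.trans hH) hX hYG,
      hH_iid.measure_setOf_eq_eq_tsum_eLpNorm_sq hH hX hYH]
    gcongr with x
    exact eLpNorm_condProbEq_mono hGH hH X x one_le_two
  have h_compl {Y : Ω → E} (hY : Measurable Y) :
      μ {ω | Y ω ≠ X ω} = μ Set.univ - μ {ω | Y ω = X ω} :=
    measure_compl (measurableSet_eq_fun hY hX) (measure_ne_top μ _)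
  rw [h_compl hYH, h_compl hYG]
  exact tsub_le_tsub_left h_agree _

end

/-- The probability that an independent posterior sample disagrees with the truth is
nonincreasing in the conditioning σ-algebra. -/
theorem prob_sample_ne_antitone
    {Ω E : Type*} [mΩ : MeasurableSpace Ω] (μ : Measure[mΩ] Ω) [IsProbabilityMeasure μ]
    [Fintype E] [Nonempty E] [MeasurableSpace E] [MeasurableSingletonClass E]
    (G H : MeasurableSpace Ω) (hGH : G ≤ H) (hH : H ≤ mΩ)
    (X YG YH : Ω → E)
    (hX : Measurable[mΩ] X) (hYG : Measurable[mΩ] YG) (hYH : Measurable[mΩ] YH)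
    (hG_iid : CondIID G μ X YG) (hH_iid : CondIID H μ X YH) :
    μ {ω | YH ω ≠ X ω} ≤ μ {ω | YG ω ≠ X ω} :=
  prob_sample_ne_antitone_general hGH hH hX hYG hYH hG_iid hH_iid
end

section
/- Let (Ω, F, P) be a probability space, G ⊆ F a sub-σ-algebra, E a nonempty finite type, and X, Y : Ω → E random variables that are conditionally i.i.d. given G. Then for every function f : E → ℝ and every function g : E → F' into an arbitrary type F', E[ f(X)·1{g(X) ≠ g(Y)} ] = E[ f(Y)·1{g(X) ≠ g(Y)} ]. -/
open MeasureTheory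

/-!
Given `G`, the joint probability of `X = x, Y = y` factors into a product which, the marginals being
equal, is symmetric in `x` and `y`. Hence `(X, Y)` and `(Y, X)` have the same law, and the
disagreement event is invariant under exchanging `X` and `Y`.
-/

open ProbabilityTheory

section Exchangeability

variable {Ω E : Type*} {G mΩ : MeasurableSpace Ω} {μ : Measure Ω} {X Y : Ω → E}

theorem CondIID.condExp_indicator_swap (hXY : CondIID G μ X Y) (x y : E) :
    μ[Set.indicator {ω | X ω = x ∧ Y ω = y} (fun _ => (1 : ℝ)) | G] =ᵐ[μ]
      μ[Set.indicator {ω | X ω = y ∧ Y ω = x} (fun _ => (1 : ℝ)) | G] := by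
  obtain ⟨hprod, hmarginal⟩ := hXY
  filter_upwards [hprod x y, hprod y x, hmarginal x, hmarginal y] with ω hxy hyx hx hy
  rw [hxy, hyx, hx, hy, mul_comm]

theorem integral_condExp_indicator_one (hG : G ≤ mΩ) [SigmaFinite (μ.trim hG)]
    {s : Set Ω} (hs : NullMeasurableSet s μ) :
    ∫ ω, (μ[s.indicator (fun _ => (1 : ℝ)) | G]) ω ∂μ = μ.real s := by
  rw [integral_condExp hG, integral_indicator₀ hs, setIntegral_const, smul_eq_mul, mul_one]

variable [IsFiniteMeasure μ] [MeasurableSpace E] [MeasurableSingletonClass E]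

theorem CondIID.measureReal_swap (hXY : CondIID G μ X Y) (hG : G ≤ mΩ)
    (hX : AEMeasurable X μ) (hY : AEMeasurable Y μ) (x y : E) :
    μ.real {ω | X ω = x ∧ Y ω = y} = μ.real {ω | X ω = y ∧ Y ω = x} := by
  have hmeas (a b : E) : NullMeasurableSet {ω | X ω = a ∧ Y ω = b} μ :=
    (hX.nullMeasurableSet_preimage (measurableSet_singleton a)).inter
      (hY.nullMeasurableSet_preimage (measurableSet_singleton b))
  rw [← integral_condExp_indicator_one hG (hmeas x y),
    ← integral_condExp_indicator_one hG (hmeas y x)]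
  exact integral_congr_ae (hXY.condExp_indicator_swap x y)

theorem CondIID.identDistrib_prodMk_swap [Countable E] (hXY : CondIID G μ X Y) (hG : G ≤ mΩ)
    (hX : AEMeasurable X μ) (hY : AEMeasurable Y μ) :
    IdentDistrib (fun ω => (X ω, Y ω)) (fun ω => (Y ω, X ω)) μ μ where
  aemeasurable_fst := hX.prodMk hY
  aemeasurable_snd := hY.prodMk hX
  map_eq := by
    refine Measure.ext_of_singleton fun ⟨x, y⟩ => ?_
    rw [Measure.map_apply_of_aemeasurable (hX.prodMk hY) (measurableSet_singleton _),
      Measure.map_apply_of_aemeasurable (hY.prodMk hX) (measurableSet_singleton _),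
      ← measureReal_eq_measureReal_iff]
    simpa only [Set.preimage, Set.mem_singleton_iff, Prod.mk.injEq, and_comm]
      using hXY.measureReal_swap hG hX hY x y

theorem integral_on_disagreement_symm_general {F' V : Type*} [NormedAddCommGroup V]
    [NormedSpace ℝ V] [Countable E] (hG : G ≤ mΩ)
    (hX : AEMeasurable X μ) (hY : AEMeasurable Y μ) (hXY : CondIID G μ X Y)
    (f : E → V) (g : E → F')
    (hf : Integrable (Set.indicator {ω | g (X ω) ≠ g (Y ω)} (fun ω => f (X ω))) μ) :
    Integrable (Set.indicator {ω | g (X ω) ≠ g (Y ω)} (fun ω => f (Y ω))) μ ∧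
      ∫ ω, Set.indicator {ω' | g (X ω') ≠ g (Y ω')} (fun ω' => f (X ω')) ω ∂μ =
        ∫ ω, Set.indicator {ω' | g (X ω') ≠ g (Y ω')} (fun ω' => f (Y ω')) ω ∂μ := by
  borelize V
  have hdisagree_comm : {ω | g (Y ω) ≠ g (X ω)} = {ω | g (X ω) ≠ g (Y ω)} :=
    Set.ext fun _ => ne_comm
  have hdistrib : IdentDistrib (Set.indicator {ω | g (X ω) ≠ g (Y ω)} (fun ω => f (X ω)))
      (Set.indicator {ω | g (Y ω) ≠ g (X ω)} (fun ω => f (Y ω))) μ μ :=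
    (hXY.identDistrib_prodMk_swap hG hX hY).comp
      (u := Set.indicator {p : E × E | g p.1 ≠ g p.2} (fun p => f p.1)) Measurable.of_discrete
  rw [hdisagree_comm] at hdistrib
  exact ⟨hdistrib.integrable_snd hf, hdistrib.integral_eq⟩

end Exchangeability

/-- If `X, Y` are conditionally i.i.d. given `G`, then for any `f : E → ℝ` and
`g : E → F'`, `E[f(X) 1{g(X) ≠ g(Y)}] = E[f(Y) 1{g(X) ≠ g(Y)}]`. -/
theorem integral_on_disagreement_symm
    {Ω E F' : Type*} [mΩ : MeasurableSpace Ω] (μ : Measure[mΩ] Ω) [IsProbabilityMeasure μ]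
    [Fintype E] [Nonempty E] [MeasurableSpace E] [MeasurableSingletonClass E]
    (G : MeasurableSpace Ω) (hG : G ≤ mΩ)
    (X Y : Ω → E) (hX : Measurable[mΩ] X) (hY : Measurable[mΩ] Y)
    (hXY : CondIID G μ X Y)
    (f : E → ℝ) (g : E → F') :
    ∫ ω, Set.indicator {ω' | g (X ω') ≠ g (Y ω')} (fun ω' => f (X ω')) ω ∂μ =
      ∫ ω, Set.indicator {ω' | g (X ω') ≠ g (Y ω')} (fun ω' => f (Y ω')) ω ∂μ := by
  have hdisagree : MeasurableSet[mΩ] {ω | g (X ω) ≠ g (Y ω)} :=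
    (hX.prodMk hY) (MeasurableSet.of_discrete (s := {p : E × E | g p.1 ≠ g p.2}))
  exact (integral_on_disagreement_symm_general hG hX.aemeasurable hY.aemeasurable hXY f g
    ((Integrable.of_finite.comp_measurable hX).indicator hdisagree)).2
end
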